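/- arXiv:2403.10268 — 3 statements merged into one kernel-verified Lean document; each statement's English description precedes it below -/
import Mathlib

section
/- Bit splitting preserves the circuit code distance: let A, v, N₁, N₂, A' and the bijection φ(c) = (c, c_v) : ker A → ker A' be as in the bit-splitting construction. Let B ∈ 𝔽₂^{k_B×n}, L ∈ 𝔽₂^{k_L×n} satisfy A Bᵀ = 0 and A Lᵀ = 0, and suppose a logical error for (B, L) exists. Let B' and L' be the matrices whose rows are the images under φ of the rows of B and L respectively. Then A' B'ᵀ = 0 and A' L'ᵀ = 0, a logical error for (B', L') exists, and d(B', L') = d(B, L). -/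
/-!
Everything goes through two maps between errors on the original and on the split code.
Folding the new coordinate back onto `v`, `e' ↦ e'|ₙ + e'_{n+1} · δ_v`, is adjoint to the row map
`φ(c) = (c, c_v)`, so `B' e' = B (fold e')` and likewise for `L` (`mulVec_splitRow`); it does not
increase the Hamming weight (`hamWt_foldErr_le`). Padding an error by `0` is a right inverse of
folding and keeps the weight. Hence logical errors map to logical errors in both directions
without weight increase, and the minimum weights agree. That `φ` maps `ker A` to `ker A'`
is `bitSplit_mul_eq_zero`: on a vector with equal entries at `v` and `n+1` the two halves of
column `v` recombine to that column.
-/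

open Matrix
open scoped Matrix

/-- Hamming weight of a vector over `𝔽₂`. -/
def hamWt {α : Type*} [Fintype α] (v : α → ZMod 2) : ℕ :=
  (Finset.univ.filter fun i => v i ≠ 0).card

/-- The check matrix `A'` obtained from `A` by bit splitting at column `v`
with neighbourhood subsets `N₁, N₂`. -/
def bitSplit {m n : ℕ} (A : Matrix (Fin m) (Fin n) (ZMod 2)) (v : Fin n)
    (N₁ N₂ : Finset (Fin m)) : Matrix (Fin m ⊕ Unit) (Fin n ⊕ Unit) (ZMod 2) :=
  Matrix.of fun a u =>
    match a, u with
    | Sum.inl a, Sum.inl u => if u = v then (if a ∈ N₁ then A a v else 0) else A a u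
    | Sum.inl a, Sum.inr _ => if a ∈ N₂ then A a v else 0
    | Sum.inr _, Sum.inl u => if u = v then 1 else 0
    | Sum.inr _, Sum.inr _ => 1

/-- `e` is a logical error for the pair `(B, L)`: `B eᵀ = 0` and `L eᵀ ≠ 0`. -/
def IsLogicalError {k l : ℕ} {α : Type*} [Fintype α]
    (B : Matrix (Fin k) α (ZMod 2)) (L : Matrix (Fin l) α (ZMod 2))
    (e : α → ZMod 2) : Prop :=
  B.mulVec e = 0 ∧ L.mulVec e ≠ 0

/-- The circuit code distance `d(B, L)`: the minimum Hamming weight of a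
logical error. -/
noncomputable def codeDist {k l : ℕ} {α : Type*} [Fintype α]
    (B : Matrix (Fin k) α (ZMod 2)) (L : Matrix (Fin l) α (ZMod 2)) : ℕ :=
  sInf (hamWt '' {e | IsLogicalError B L e})

/-- Fold an error on the split code back: the entry at the new coordinate is added at `v`. -/
def foldErr {n : ℕ} (v : Fin n) (e : Fin n ⊕ Unit → ZMod 2) : Fin n → ZMod 2 :=
  fun u => e (Sum.inl u) + if u = v then e (Sum.inr ()) else 0

/-- Folding is adjoint to the row map `φ(c) = (c, c_v)`. -/
lemma mulVec_splitRow {k n : ℕ} (v : Fin n) (B : Matrix (Fin k) (Fin n) (ZMod 2))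
    (B' : Matrix (Fin k) (Fin n ⊕ Unit) (ZMod 2))
    (hB' : ∀ i, B' i = (Sum.elim (B i) fun _ => B i v : Fin n ⊕ Unit → ZMod 2))
    (e : Fin n ⊕ Unit → ZMod 2) : B'.mulVec e = B.mulVec (foldErr v e) := by
  ext i
  simp [Matrix.mulVec, dotProduct, hB', foldErr, mul_add, Finset.sum_add_distrib]

lemma foldErr_elim_zero {n : ℕ} (v : Fin n) (e : Fin n → ZMod 2) :
    foldErr v (Sum.elim e fun _ => 0) = e := by
  ext u
  simp [foldErr]

lemma hamWt_elim_zero {n : ℕ} (e : Fin n → ZMod 2) :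
    hamWt (Sum.elim e fun _ => 0 : Fin n ⊕ Unit → ZMod 2) = hamWt e := by
  simp only [hamWt, Finset.card_filter, Fintype.sum_sum_type]
  simp only [Sum.elim_inl, Sum.elim_inr, ne_eq, not_true_eq_false, if_false,
    Finset.sum_const_zero, add_zero]
  -- The two sides differ only in their decidability instances.
  exact Finset.sum_congr rfl fun u _ => by congr

lemma hamWt_foldErr_le {n : ℕ} (v : Fin n) (e : Fin n ⊕ Unit → ZMod 2) :
    hamWt (foldErr v e) ≤ hamWt e := by
  simp only [hamWt, Finset.card_filter, Fintype.sum_sum_type, Finset.univ_unique,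
    Finset.sum_singleton]
  -- The new coordinate's contribution is charged to position `v`.
  have h : (if e (Sum.inr ()) ≠ 0 then 1 else 0) =
      ∑ u : Fin n, if u = v then (if e (Sum.inr ()) ≠ 0 then 1 else 0) else 0 := by
    simp
  change _ ≤ _ + (if e (Sum.inr ()) ≠ 0 then 1 else 0)
  rw [h, ← Finset.sum_add_distrib]
  refine Finset.sum_le_sum fun u _ => ?_
  unfold foldErr
  by_cases hu : u = v <;> by_cases h1 : e (Sum.inl u) = 0 <;>
    by_cases h2 : e (Sum.inr ()) = 0 <;> simp [hu, h1, h2] <;> split_ifs <;> simp_all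

/-- The map `φ(c) = (c, c_v)` sends `ker A` into the kernel of the split matrix. -/
lemma bitSplit_mul_eq_zero {m n k : ℕ} (A : Matrix (Fin m) (Fin n) (ZMod 2)) (v : Fin n)
    (N₁ N₂ : Finset (Fin m)) (hdisj : Disjoint N₁ N₂)
    (hcover : N₁ ∪ N₂ = Finset.univ.filter fun a => A a v = 1)
    (B : Matrix (Fin k) (Fin n) (ZMod 2)) (hAB : A * Bᵀ = 0)
    (B' : Matrix (Fin k) (Fin n ⊕ Unit) (ZMod 2))
    (hB' : ∀ i, B' i = (Sum.elim (B i) fun _ => B i v : Fin n ⊕ Unit → ZMod 2)) :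
    bitSplit A v N₁ N₂ * B'ᵀ = 0 := by
  ext a i
  rcases a with a | a
  · have hz : ∑ u, A a u * B i u = 0 := by
      have := congrFun (congrFun hAB a) i
      simpa [Matrix.mul_apply] using this
    -- The two halves of column `v` add up to that column.
    have hsplit : (if a ∈ N₁ then A a v else 0) + (if a ∈ N₂ then A a v else 0) = A a v := by
      have hmem : a ∈ N₁ ∪ N₂ ↔ A a v = 1 := by simp [hcover]
      rw [Finset.mem_union] at hmem
      have hd : a ∈ N₁ → a ∉ N₂ := fun h => Finset.disjoint_left.mp hdisj h
      have h01 : A a v = 0 ∨ A a v = 1 := by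
        generalize A a v = x
        revert x
        decide
      by_cases h1 : a ∈ N₁ <;> by_cases h2 : a ∈ N₂ <;> simp_all
    have key : ∀ u, (if u = v then (if a ∈ N₁ then A a v else 0) else A a u) * B i u
        + (if u = v then (if a ∈ N₂ then A a v else 0) * B i v else 0) = A a u * B i u := by
      intro u
      by_cases hu : u = v
      · subst hu
        simp only [if_true]
        rw [← add_mul, hsplit]
      · simp [hu]
    rw [← Finset.sum_congr rfl fun u _ => key u, Finset.sum_add_distrib] at hz
    simp only [Finset.sum_ite_eq', Finset.mem_univ, if_true] at hz
    simpa [Matrix.mul_apply, bitSplit, hB'] using hz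
  · simp [Matrix.mul_apply, bitSplit, hB', CharTwo.add_self_eq_zero]

/-- bit splitting preserves the circuit code distance. -/
theorem bit_splitting_preserves_distance (m n kB kL : ℕ)
    (A : Matrix (Fin m) (Fin n) (ZMod 2)) (v : Fin n) (N₁ N₂ : Finset (Fin m))
    (hdisj : Disjoint N₁ N₂)
    (hcover : N₁ ∪ N₂ = Finset.univ.filter fun a => A a v = 1)
    (B : Matrix (Fin kB) (Fin n) (ZMod 2)) (L : Matrix (Fin kL) (Fin n) (ZMod 2))
    (hAB : A * Bᵀ = 0) (hAL : A * Lᵀ = 0)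
    (hex : ∃ e : Fin n → ZMod 2, IsLogicalError B L e)
    (B' : Matrix (Fin kB) (Fin n ⊕ Unit) (ZMod 2))
    (L' : Matrix (Fin kL) (Fin n ⊕ Unit) (ZMod 2))
    (hB' : ∀ i, B' i = (Sum.elim (B i) fun _ => B i v : Fin n ⊕ Unit → ZMod 2))
    (hL' : ∀ i, L' i = (Sum.elim (L i) fun _ => L i v : Fin n ⊕ Unit → ZMod 2)) :
    bitSplit A v N₁ N₂ * B'ᵀ = 0 ∧
    bitSplit A v N₁ N₂ * L'ᵀ = 0 ∧
    (∃ e' : Fin n ⊕ Unit → ZMod 2, IsLogicalError B' L' e') ∧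
    codeDist B' L' = codeDist B L := by
  have hB := mulVec_splitRow v B B' hB'
  have hL := mulVec_splitRow v L L' hL'
  have hpad : ∀ e, IsLogicalError B L e → IsLogicalError B' L' (Sum.elim e fun _ => 0) := by
    intro e he
    unfold IsLogicalError
    rw [hB, hL, foldErr_elim_zero]
    exact he
  have hfold : ∀ e, IsLogicalError B' L' e → IsLogicalError B L (foldErr v e) := by
    intro e he
    unfold IsLogicalError at he ⊢
    rwa [hB, hL] at he
  obtain ⟨e₀, he₀⟩ := hex
  refine ⟨bitSplit_mul_eq_zero A v N₁ N₂ hdisj hcover B hAB B' hB',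
    bitSplit_mul_eq_zero A v N₁ N₂ hdisj hcover L hAL L' hL', ⟨_, hpad e₀ he₀⟩, ?_⟩
  unfold codeDist
  apply le_antisymm
  · refine le_csInf ⟨_, e₀, he₀, rfl⟩ ?_
    rintro _ ⟨e, he, rfl⟩
    exact Nat.sInf_le ⟨_, hpad e he, hamWt_elim_zero e⟩
  · refine le_csInf ⟨_, _, hpad e₀ he₀, rfl⟩ ?_
    rintro _ ⟨e, he, rfl⟩
    exact le_trans (Nat.sInf_le ⟨foldErr v e, hfold e he, rfl⟩) (hamWt_foldErr_le v e)
end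

section
/- Distance comparison under a weight-controlled error transport: let A ∈ 𝔽₂^{m×N}, A' ∈ 𝔽₂^{m'×N'}, B ∈ 𝔽₂^{k_B×N}, L ∈ 𝔽₂^{k_L×N} with A Bᵀ = 0 and A Lᵀ = 0, and let k be a positive integer. Let φ : ker A → ker A' be an 𝔽₂-linear bijection, and let B', L' be the matrices whose rows are the images under φ of the rows of B, L respectively. Let ψ : 𝔽₂^N → 𝔽₂^{N'} be 𝔽₂-linear such that: (i) φ(c)·ψ(e) = c·e for every c ∈ ker A and e ∈ 𝔽₂^N; (ii) the Hamming weight of ψ(e) equals that of e for every e; (iii) for every e' ∈ 𝔽₂^{N'} there exists e ∈ 𝔽₂^N with |e| ≤ k·|e'| and c'·e' = c'·ψ(e) for every c' ∈ ker A'. If a logical error for (B, L) exists, then a logical error for (B', L') exists and d(B, L)/k ≤ d(B', L') ≤ d(B, L). -/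
/-!
The syndromes `B e` and `L e` only involve dot products of `e` with vectors of `ker A`, and
condition (i) says that `ψ` preserves these along `φ`: `B' (ψ e) = B e` and `L' (ψ e) = L e`.
So `ψ` maps logical errors for `(B, L)` to logical errors for `(B', L')` of the same weight, which
gives existence and the upper bound. Conversely, by (iii) a minimum-weight logical error `e'` for
`(B', L')` has the same syndromes as some `ψ e` with `|e| ≤ k |e'|`; that `e` is then a logical
error for `(B, L)`, which gives `d(B, L) ≤ k d(B', L')`.
-/

open Matrix
open scoped Matrix

theorem codeDist_le_hamWt {k l : ℕ} {α : Type*} [Fintype α]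
    {B : Matrix (Fin k) α (ZMod 2)} {L : Matrix (Fin l) α (ZMod 2)} {e : α → ZMod 2}
    (he : IsLogicalError B L e) : codeDist B L ≤ hamWt e :=
  Nat.sInf_le ⟨e, he, rfl⟩

theorem exists_hamWt_eq_codeDist {k l : ℕ} {α : Type*} [Fintype α]
    {B : Matrix (Fin k) α (ZMod 2)} {L : Matrix (Fin l) α (ZMod 2)}
    (h : ∃ e, IsLogicalError B L e) : ∃ e, IsLogicalError B L e ∧ hamWt e = codeDist B L := by
  obtain ⟨e, he⟩ := h
  exact Nat.sInf_mem (s := hamWt '' {e | IsLogicalError B L e}) ⟨_, e, he, rfl⟩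

/-- distance comparison under a weight-controlled error
transport `ψ` along a linear bijection `φ : ker A → ker A'`. -/
theorem distance_comparison_under_transport (m m' N N' kB kL k : ℕ) (hk : 0 < k)
    (A : Matrix (Fin m) (Fin N) (ZMod 2)) (A' : Matrix (Fin m') (Fin N') (ZMod 2))
    (B : Matrix (Fin kB) (Fin N) (ZMod 2)) (L : Matrix (Fin kL) (Fin N) (ZMod 2))
    (hAB : A * Bᵀ = 0) (hAL : A * Lᵀ = 0)
    (φ : ↥(LinearMap.ker A.mulVecLin) ≃ₗ[ZMod 2] ↥(LinearMap.ker A'.mulVecLin))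
    (hrowsB : ∀ i, B i ∈ LinearMap.ker A.mulVecLin)
    (hrowsL : ∀ i, L i ∈ LinearMap.ker A.mulVecLin)
    (B' : Matrix (Fin kB) (Fin N') (ZMod 2)) (L' : Matrix (Fin kL) (Fin N') (ZMod 2))
    (hB' : ∀ i, B' i = (φ ⟨B i, hrowsB i⟩ : Fin N' → ZMod 2))
    (hL' : ∀ i, L' i = (φ ⟨L i, hrowsL i⟩ : Fin N' → ZMod 2))
    (ψ : (Fin N → ZMod 2) →ₗ[ZMod 2] (Fin N' → ZMod 2))
    (hψ₁ : ∀ (c : ↥(LinearMap.ker A.mulVecLin)) (e : Fin N → ZMod 2),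
      (φ c : Fin N' → ZMod 2) ⬝ᵥ ψ e = (c : Fin N → ZMod 2) ⬝ᵥ e)
    (hψ₂ : ∀ e : Fin N → ZMod 2, hamWt (ψ e) = hamWt e)
    (hψ₃ : ∀ e' : Fin N' → ZMod 2, ∃ e : Fin N → ZMod 2,
      hamWt e ≤ k * hamWt e' ∧
      ∀ c' : ↥(LinearMap.ker A'.mulVecLin),
        (c' : Fin N' → ZMod 2) ⬝ᵥ e' = (c' : Fin N' → ZMod 2) ⬝ᵥ ψ e)
    (hex : ∃ e : Fin N → ZMod 2, IsLogicalError B L e) :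
    (∃ e' : Fin N' → ZMod 2, IsLogicalError B' L' e') ∧
    (codeDist B L : ℝ) / (k : ℝ) ≤ (codeDist B' L' : ℝ) ∧
    codeDist B' L' ≤ codeDist B L := by
  have hBψ : ∀ e, B' *ᵥ ψ e = B *ᵥ e := fun e => funext fun i => by
    change B' i ⬝ᵥ ψ e = B i ⬝ᵥ e
    rw [hB', hψ₁]
  have hLψ : ∀ e, L' *ᵥ ψ e = L *ᵥ e := fun e => funext fun i => by
    change L' i ⬝ᵥ ψ e = L i ⬝ᵥ e
    rw [hL', hψ₁]
  have hpush : ∀ e, IsLogicalError B L e → IsLogicalError B' L' (ψ e) := fun e he => by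
    rwa [IsLogicalError, hBψ, hLψ]
  have hex' : ∃ e', IsLogicalError B' L' e' := hex.imp' ψ hpush
  refine ⟨hex', ?_, ?_⟩
  · obtain ⟨e', he', hwt'⟩ := exists_hamWt_eq_codeDist hex'
    obtain ⟨e, hwt, hdot⟩ := hψ₃ e'
    have hB : B' *ᵥ e' = B *ᵥ e := by
      rw [← hBψ]
      funext i
      change B' i ⬝ᵥ e' = B' i ⬝ᵥ ψ e
      rw [hB', hdot]
    have hL : L' *ᵥ e' = L *ᵥ e := by
      rw [← hLψ]
      funext i
      change L' i ⬝ᵥ e' = L' i ⬝ᵥ ψ e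
      rw [hL', hdot]
    have he : IsLogicalError B L e := by
      rwa [IsLogicalError, hB, hL] at he'
    have hle : codeDist B L ≤ k * codeDist B' L' :=
      hwt' ▸ (codeDist_le_hamWt he).trans hwt
    rw [div_le_iff₀' (by exact_mod_cast hk)]
    exact_mod_cast hle
  · obtain ⟨e, he, hwt⟩ := exists_hamWt_eq_codeDist hex
    rw [← hwt, ← hψ₂ e]
    exact codeDist_le_hamWt (hpush e he)
end

section
/- Lower bound on the weight of undetected logical errors in transversal CSS circuits: suppose a_X g_Xᵀ = 0. Let u ∈ 𝔽₂^{m_X^B×n} and v ∈ 𝔽₂^{m_X^C×r_X} satisfy u G_Xᵀ = a_Xᵀ v and g_X u J_Xᵀ ≠ 0. Then the set {r ∈ 𝔽₂ⁿ : G_X rᵀ = 0 and J_X rᵀ ≠ 0} is nonempty, and wt(u) + wt(v) ≥ min{ |r| : r ∈ 𝔽₂ⁿ, G_X rᵀ = 0, J_X rᵀ ≠ 0 }, where wt denotes the number of nonzero entries of a matrix and |·| the Hamming weight of a vector. -/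
/-!
Since `g_X u J_Xᵀ ≠ 0`, some row `r` of `g_X u` satisfies `J_X r ≠ 0`. Every row of `g_X u` lies in
the kernel of `G_X`, because `g_X u G_Xᵀ = g_X a_Xᵀ v = (a_X g_Xᵀ)ᵀ v = 0`. Thus `r` is a logical
error of the code, and as a combination of rows of `u` its weight is at most that of `u`
(`hamWt_mul_row_le_matWt`). The bound therefore holds even without the `wt(v)` term.
-/

open Matrix
open scoped Matrix

/-- The number of nonzero entries of a matrix over `𝔽₂`. -/
def matWt {α β : Type*} [Fintype α] [Fintype β] (M : Matrix α β (ZMod 2)) : ℕ :=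
  (Finset.univ.filter fun p : α × β => M p.1 p.2 ≠ 0).card

/-- A nonzero entry of a row of `g * u` forces a nonzero entry in the same column of `u`, so the
support of the row lies in the column projection of the support of `u`. -/
lemma hamWt_mul_row_le_matWt {α β γ : Type*} [Fintype β] [Fintype γ]
    (g : Matrix α β (ZMod 2)) (u : Matrix β γ (ZMod 2)) (i : α) :
    hamWt ((g * u) i) ≤ matWt u := by
  classical
  unfold hamWt matWt
  refine le_trans (Finset.card_le_card ?_) (Finset.card_image_le (f := Prod.snd))
  intro j hj
  simp only [Finset.mem_filter, Finset.mem_univ, true_and, Finset.mem_image, Prod.exists,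
    exists_eq_right] at hj ⊢
  by_contra! h
  exact hj (by simp [Matrix.mul_apply, h])

/-- lower bound on the weight of undetected logical errors in
transversal CSS circuits.  If `u G_Xᵀ = a_Xᵀ v` and `g_X u J_Xᵀ ≠ 0`, then a
code logical error exists and `wt(u) + wt(v)` is at least the minimum weight
of a code logical error. -/
theorem undetected_logical_error_weight_bound
    (n rX k mXB mXC kX : ℕ) (hn : 0 < n) (hrX : 0 < rX) (hk : 0 < k)
    (GX : Matrix (Fin rX) (Fin n) (ZMod 2)) (JX : Matrix (Fin k) (Fin n) (ZMod 2))
    (aX : Matrix (Fin mXC) (Fin mXB) (ZMod 2)) (gX : Matrix (Fin kX) (Fin mXB) (ZMod 2))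
    (hag : aX * gXᵀ = 0)
    (u : Matrix (Fin mXB) (Fin n) (ZMod 2)) (v : Matrix (Fin mXC) (Fin rX) (ZMod 2))
    (huv : u * GXᵀ = aXᵀ * v) (hne : gX * u * JXᵀ ≠ 0) :
    {r : Fin n → ZMod 2 | GX.mulVec r = 0 ∧ JX.mulVec r ≠ 0}.Nonempty ∧
    sInf (hamWt '' {r : Fin n → ZMod 2 | GX.mulVec r = 0 ∧ JX.mulVec r ≠ 0})
      ≤ matWt u + matWt v := by
  have hker : gX * u * GXᵀ = 0 := by
    rw [Matrix.mul_assoc, huv, ← Matrix.mul_assoc]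
    have h : gX * aXᵀ = 0 := by simpa using congrArg Matrix.transpose hag
    rw [h, Matrix.zero_mul]
  have hrow : ∀ {m : ℕ} (A : Matrix (Fin m) (Fin n) (ZMod 2)) (i : Fin kX),
      A.mulVec ((gX * u) i) = (gX * u * Aᵀ) i := by
    intro m A i
    ext j
    simp [Matrix.mulVec, dotProduct, Matrix.mul_apply (M := gX * u), mul_comm]
  obtain ⟨i, hi⟩ := Function.ne_iff.mp hne
  have hmem : (gX * u) i ∈ {r : Fin n → ZMod 2 | GX.mulVec r = 0 ∧ JX.mulVec r ≠ 0} := by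
    refine ⟨?_, ?_⟩
    · rw [hrow, hker]
      rfl
    · rw [hrow]
      exact hi
  exact ⟨⟨_, hmem⟩, (Nat.sInf_le (Set.mem_image_of_mem _ hmem)).trans
    ((hamWt_mul_row_le_matWt gX u i).trans (Nat.le_add_right _ _))⟩
end
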